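/- Let V be a countably infinite set, k ≥ 2, and let G be a (k−1)-distinguishing class over V with finite graph VC dimension. Then for every ε > 0 there exist two finitely supported probability distributions q₁ and q₂ on V with disjoint supports such that IPM_G(q₁,q₂) < ε. -/

import Mathlib

open scoped BigOperators

namespace GraphDisc

/-- A `k`-distinguisher is symmetric: invariant under all permutations of arguments. -/
def IsSymmetric {V : Type*} {k : ℕ} (g : (Fin k → V) → Bool) : Prop :=
  ∀ (σ : Equiv.Perm (Fin k)) (w : Fin k → V), g (w ∘ σ) = g w

/-- A `k`-distinguishing class: a family of symmetric Boolean `k`-ary functions. -/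
def IsDistinguishingClass {V : Type*} {k : ℕ} (G : Set ((Fin k → V) → Bool)) : Prop :=
  ∀ g ∈ G, IsSymmetric g

/-- `p` is a probability distribution on `V` (as a mass function). -/
def IsDist {V : Type*} (p : V → ℝ) : Prop := (∀ v, 0 ≤ p v) ∧ HasSum p 1

/-- `L_P(g)`: expected value of `g` on a `k`-tuple of i.i.d. samples from `p`. -/
noncomputable def LP {V : Type*} {k : ℕ} (p : V → ℝ) (g : (Fin k → V) → Bool) : ℝ :=
  ∑' w : Fin k → V, (∏ i, p (w i)) * (if g w then 1 else 0)

/-- `L_S(g)`: empirical frequency of `g` on all `k`-tuples from the sample `S`. -/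
noncomputable def LS {V : Type*} {k m : ℕ} (S : Fin m → V) (g : (Fin k → V) → Bool) : ℝ :=
  (∑ t : Fin k → Fin m, if g (S ∘ t) then (1 : ℝ) else 0) / (m : ℝ) ^ k

/-- Probability of an event `E` under an i.i.d. sample of size `m` from `p`. -/
noncomputable def Prob {V : Type*} (p : V → ℝ) {m : ℕ} (E : Set (Fin m → V)) : ℝ :=
  ∑' S : Fin m → V, E.indicator (fun S => ∏ i, p (S i)) S

/-- Probability of an event `E` under two independent i.i.d. samples of size `m`. -/
noncomputable def Prob2 {V : Type*} (p₁ p₂ : V → ℝ) {m : ℕ}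
    (E : Set ((Fin m → V) × (Fin m → V))) : ℝ :=
  ∑' S : (Fin m → V) × (Fin m → V),
    E.indicator (fun S => (∏ i, p₁ (S.1 i)) * ∏ i, p₂ (S.2 i)) S

/-- IPM distance induced by a class of `k`-ary distinguishers. -/
noncomputable def IPM {V : Type*} {k : ℕ} (G : Set ((Fin k → V) → Bool))
    (p₁ p₂ : V → ℝ) : ℝ :=
  ⨆ g ∈ G, |LP p₁ g - LP p₂ g|

/-- `L_P(d)` for a unary Boolean function `d`. -/
noncomputable def LP1 {V : Type*} (p : V → ℝ) (d : V → Bool) : ℝ :=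
  ∑' v : V, p v * (if d v then 1 else 0)

/-- IPM distance for a family of unary Boolean functions. -/
noncomputable def IPM1 {V : Type*} (D : Set (V → Bool)) (p₁ p₂ : V → ℝ) : ℝ :=
  ⨆ d ∈ D, |LP1 p₁ d - LP1 p₂ d|

/-- `L_P(g)` for a binary (curried) Boolean function `g`. -/
noncomputable def LP2 {V : Type*} (p : V → ℝ) (g : V → V → Bool) : ℝ :=
  ∑' w : V × V, (p w.1 * p w.2) * (if g w.1 w.2 then 1 else 0)

/-- `D` shatters the finite set `T`: every Boolean pattern on `T` is realized in `D`. -/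
def Shatters {X : Type*} (D : Set (X → Bool)) (T : Finset X) : Prop :=
  ∀ f : X → Bool, ∃ d ∈ D, ∀ x ∈ T, d x = f x

/-- The VC dimension of a family of Boolean functions. -/
noncomputable def vcDim {X : Type*} (D : Set (X → Bool)) : ℕ∞ :=
  ⨆ T ∈ {T : Finset X | Shatters D T}, (T.card : ℕ∞)

/-- Fixing the first argument of a `(k+1)`-ary function to `v`. -/
def proj {V : Type*} {k : ℕ} (v : V) (g : (Fin (k + 1) → V) → Bool) :
    (Fin k → V) → Bool := fun u => g (Fin.cons v u)

/-- The graph VC dimension, defined inductively: for `k = 1` it is the usual VC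
dimension; for `k > 1` it is the supremum over `v` of the graph VC dimension of the
projected class `G_v`. -/
noncomputable def gvcDim {V : Type*} : (k : ℕ) → Set ((Fin k → V) → Bool) → ℕ∞
  | 0, G => vcDim G
  | 1, G => vcDim G
  | (k + 2), G => ⨆ v : V, gvcDim (k + 1) (proj v '' G)

open Classical in
/-- Mixture `q·δ_v + (1−q)·p`. -/
noncomputable def mix {V : Type*} (q : ℝ) (v : V) (p : V → ℝ) : V → ℝ :=
  fun u => q * (if u = v then 1 else 0) + (1 - q) * p u

/-- The class of majority-vote threshold functions over `m`-tuples from `D`. -/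
noncomputable def thresholdClass {V : Type*} (D : Set (V → Bool)) (m : ℕ) :
    Set (V → Bool) :=
  {h | ∃ d : Fin m → (V → Bool), (∀ i, d i ∈ D) ∧
        h = fun v => decide ((0 : ℝ) ≤ ∑ i, (2 * (if d i v then (1 : ℝ) else 0) - 1))}

/-! Take `N` disjoint pairs of points of `V`, split each pair by an independent fair coin, and let
`q₁`, `q₂` be uniform on the two halves. Replacing `q₁` by `q₂` one coordinate at a time bounds
`|LP q₁ g - LP q₂ g|` by `|LP1 q₁ d - LP1 q₂ d|` for the unary functions `d` obtained from `g` by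
freezing all arguments but one. Symmetry moves the free argument to the last place, so finite graph
VC dimension bounds the VC dimension of these functions, and by Sauer–Shelah only polynomially many
of them (in `N`) are distinct on the chosen points. For fixed `l > 0`, a given `d` has
`|LP1 q₁ d - LP1 q₂ d| > l` with probability at most `2 * exp (-l ^ 2 * N / 2)`, so for large `N`
some splitting is good for all of them at once. -/

section VCDimension

variable {X Y : Type*}

lemma Shatters.card_le_vcDim {D : Set (X → Bool)} {T : Finset X} (hT : Shatters D T) :
    (T.card : ℕ∞) ≤ vcDim D :=
  le_iSup₂_of_le T hT le_rfl

lemma Shatters.map {D : Set (Y → Bool)} {e : X ↪ Y} {T : Finset X}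
    (hT : Shatters ((· ∘ e) '' D) T) : Shatters D (T.map e) := by
  intro f
  obtain ⟨_, ⟨d, hd, rfl⟩, hdf⟩ := hT (f ∘ e)
  exact ⟨d, hd, Finset.forall_mem_map.2 hdf⟩

lemma vcDim_image_comp_le (e : X ↪ Y) (D : Set (Y → Bool)) : vcDim ((· ∘ e) '' D) ≤ vcDim D :=
  iSup₂_le fun T hT => T.card_map e ▸ (Shatters.map hT).card_le_vcDim

lemma ncard_le_of_vcDim_le [Fintype X] [Nonempty X] {D : Set (X → Bool)} {d : ℕ}
    (hD : vcDim D ≤ d) : D.ncard ≤ (d + 1) * Fintype.card X ^ d := by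
  classical
  let trueSet (f : X → Bool) : Finset X := {x | f x}
  have trueSet_injective : trueSet.Injective := fun f g hfg => funext fun x =>
    Bool.eq_iff_iff.2 (by simpa [trueSet] using Finset.ext_iff.1 hfg x)
  let A : Finset (Finset X) := D.toFinset.image trueSet
  have card_le_of_shatters : ∀ T ∈ A.shatterer, T.card ≤ d := by
    intro T hT
    suffices Shatters D T from by exact_mod_cast this.card_le_vcDim.trans hD
    intro f
    obtain ⟨_, hgA, hgf⟩ := Finset.mem_shatterer.1 hT (Finset.filter_subset (f ·) T)
    obtain ⟨g, hg, rfl⟩ := Finset.mem_image.1 hgA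
    refine ⟨g, Set.mem_toFinset.1 hg, fun x hx => Bool.eq_iff_iff.2 ?_⟩
    simpa [trueSet, hx] using Finset.ext_iff.1 hgf x
  have vcDim_le : A.vcDim ≤ d := Finset.sup_le card_le_of_shatters
  calc D.ncard = A.card := by
        rw [Set.ncard_eq_toFinset_card', Finset.card_image_of_injective _ trueSet_injective]
    _ ≤ A.shatterer.card := A.card_le_card_shatterer
    _ ≤ ∑ k ∈ Finset.Iic A.vcDim, (Fintype.card X).choose k :=
        Finset.card_shatterer_le_sum_vcDim
    _ ≤ ∑ _k ∈ Finset.Iic A.vcDim, Fintype.card X ^ d := by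
        refine Finset.sum_le_sum fun k hk => (Nat.choose_le_pow _ _).trans ?_
        exact Nat.pow_le_pow_right Fintype.card_pos ((Finset.mem_Iic.1 hk).trans vcDim_le)
    _ = (A.vcDim + 1) * Fintype.card X ^ d := by simp
    _ ≤ (d + 1) * Fintype.card X ^ d := by gcongr

end VCDimension

section Fibers

variable {V α : Type*} {n : ℕ}

/-- The unary functions obtained from members of `G` by freezing every argument but the `j`-th to
its value in `w`; these are the functions met when one coordinate of a tuple is resampled. The
entry `w j` is irrelevant. -/
def fiberClass (G : Set ((Fin n → V) → Bool)) (j : Fin n) (w : Fin n → V) : Set (V → Bool) :=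
  (fun g x => g (Function.update w j x)) '' G

lemma fiberClass_succ (G : Set ((Fin (n + 1) → V) → Bool)) (j : Fin n) (w : Fin (n + 1) → V) :
    fiberClass G j.succ w = fiberClass (proj (w 0) '' G) j (Fin.tail w) := by
  simp only [fiberClass, Set.image_image, proj, Fin.cons_update, Fin.cons_self_tail]

lemma fiberClass_comp_perm {G : Set ((Fin n → V) → Bool)} (hG : IsDistinguishingClass G)
    (σ : Equiv.Perm (Fin n)) (j : Fin n) (w : Fin n → V) :
    fiberClass G (σ.symm j) (w ∘ σ) = fiberClass G j w := by
  refine Set.image_congr fun g hg => funext fun x => ?_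
  rw [← Function.update_comp_equiv, hG g hg]

lemma fiberClass_image_comp (e : α → V) (G : Set ((Fin n → V) → Bool)) (j : Fin n)
    (w : Fin n → α) :
    fiberClass ((fun g u => g (e ∘ u)) '' G) j w = (· ∘ e) '' fiberClass G j (e ∘ w) := by
  simp only [fiberClass, Set.image_image, Function.comp_update]
  rfl

lemma IsDistinguishingClass.image_proj {G : Set ((Fin (n + 1) → V) → Bool)}
    (hG : IsDistinguishingClass G) (v : V) : IsDistinguishingClass (proj v '' G) := by
  rintro _ ⟨g, hg, rfl⟩ σ w
  let τ : Equiv.Perm (Fin (n + 1)) := Equiv.Perm.decomposeFin.symm (0, σ)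
  have cons_comp : (Fin.cons v (w ∘ σ) : Fin (n + 1) → V) = Fin.cons v w ∘ τ := by
    funext i
    cases i using Fin.cases <;> simp [τ]
  rw [proj, cons_comp, hG g hg τ, proj]

lemma vcDim_fiberClass_le_gvcDim {G : Set ((Fin n → V) → Bool)} (hG : IsDistinguishingClass G)
    (j : Fin n) (w : Fin n → V) : vcDim (fiberClass G j w) ≤ gvcDim n G := by
  induction n with
  | zero => exact j.elim0
  | succ n ih =>
    cases n with
    | zero =>
      let e : V ↪ (Fin 1 → V) := ⟨Function.update w j, Function.update_injective w j⟩
      exact vcDim_image_comp_le e G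
    | succ n =>
      have vcDim_succ_le (i : Fin (n + 1)) (u : Fin (n + 2) → V) :
          vcDim (fiberClass G i.succ u) ≤ gvcDim (n + 2) G := by
        rw [fiberClass_succ]
        exact (ih (hG.image_proj (u 0)) i (Fin.tail u)).trans
          (le_iSup (fun v => gvcDim (n + 1) (proj v '' G)) (u 0))
      cases j using Fin.cases with
      | succ i => exact vcDim_succ_le i w
      | zero =>
        rw [← fiberClass_comp_perm hG (Equiv.swap 0 1) 0 w, Equiv.symm_swap,
          Equiv.swap_apply_left]
        exact vcDim_succ_le 0 _

lemma ncard_iUnion_fiberClass_le [Fintype V] [Nonempty V] {G : Set ((Fin n → V) → Bool)} {d : ℕ}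
    (hG : ∀ j w, vcDim (fiberClass G j w) ≤ d) :
    (⋃ j, ⋃ w, fiberClass G j w).ncard ≤
      n * (Fintype.card V ^ n * ((d + 1) * Fintype.card V ^ d)) := by
  calc (⋃ j, ⋃ w, fiberClass G j w).ncard
      ≤ ∑ j, (⋃ w, fiberClass G j w).ncard := Set.ncard_iUnion_le_of_fintype _
    _ ≤ ∑ j, ∑ w, (fiberClass G j w).ncard :=
        Finset.sum_le_sum fun j _ => Set.ncard_iUnion_le_of_fintype _
    _ ≤ ∑ _j : Fin n, ∑ _w : Fin n → V, (d + 1) * Fintype.card V ^ d :=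
        Finset.sum_le_sum fun j _ => Finset.sum_le_sum fun w _ => ncard_le_of_vcDim_le (hG j w)
    _ = n * (Fintype.card V ^ n * ((d + 1) * Fintype.card V ^ d)) := by simp

end Fibers

section Hybrid

variable {V : Type*} {n : ℕ}

lemma IsDist.nonempty {p : V → ℝ} (hp : IsDist p) : Nonempty V := by
  by_contra! hV
  exact zero_ne_one (hasSum_empty.unique hp.2)

lemma IsDist.sum_eq_one [Fintype V] {p : V → ℝ} (hp : IsDist p) : ∑ v, p v = 1 :=
  (hasSum_fintype p).unique hp.2

lemma IsDist.pi [Finite V] {p : V → ℝ} (hp : IsDist p) :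
    IsDist fun w : Fin n → V => ∏ i, p (w i) := by
  cases nonempty_fintype V
  refine ⟨fun w => Finset.prod_nonneg fun i _ => hp.1 _, ?_⟩
  have sum_prod_eq_one : ∑ w : Fin n → V, ∏ i, p (w i) = 1 := by
    rw [← Fintype.sum_pow, hp.sum_eq_one, one_pow]
  exact sum_prod_eq_one ▸ hasSum_fintype _

lemma IsDist.abs_sum_mul_le [Fintype V] {p f : V → ℝ} (hp : IsDist p) {δ : ℝ}
    (hf : ∀ v, |f v| ≤ δ) :
    |∑ v, p v * f v| ≤ δ := by
  calc |∑ v, p v * f v| ≤ ∑ v, |p v * f v| := Finset.abs_sum_le_sum_abs _ _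
    _ ≤ ∑ v, p v * δ := Finset.sum_le_sum fun v _ => by
        rw [abs_mul, abs_of_nonneg (hp.1 v)]
        exact mul_le_mul_of_nonneg_left (hf v) (hp.1 v)
    _ = δ := by rw [← Finset.sum_mul, hp.sum_eq_one, one_mul]

lemma LP_eq_sum [Fintype V] (p : V → ℝ) (g : (Fin n → V) → Bool) :
    LP p g = ∑ w, (∏ i, p (w i)) * (if g w then 1 else 0) :=
  tsum_fintype _

lemma LP1_eq_sum [Fintype V] (p : V → ℝ) (d : V → Bool) :
    LP1 p d = ∑ v, p v * (if d v then 1 else 0) :=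
  tsum_fintype _

lemma LP_eq_sum_mul_LP_proj [Fintype V] (p : V → ℝ) (g : (Fin (n + 1) → V) → Bool) :
    LP p g = ∑ x, p x * LP p (proj x g) := by
  simp only [LP_eq_sum, Finset.mul_sum]
  rw [← (Fin.consEquiv fun _ : Fin (n + 1) => V).sum_comp, Fintype.sum_prod_type]
  simp only [Fin.consEquiv, Equiv.coe_fn_mk, Fin.prod_univ_succ, Fin.cons_zero, Fin.cons_succ,
    mul_assoc]
  rfl

lemma sum_mul_LP_proj [Fintype V] (a p : V → ℝ) (g : (Fin (n + 1) → V) → Bool) :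
    ∑ x, a x * LP p (proj x g) = ∑ w, (∏ i, p (w i)) * LP1 a fun x => g (Fin.cons x w) := by
  simp only [LP_eq_sum, LP1_eq_sum, Finset.mul_sum]
  rw [Finset.sum_comm]
  simp only [mul_left_comm]
  rfl

lemma abs_LP_sub_LP_le [Finite V] {a b : V → ℝ} (ha : IsDist a) (hb : IsDist b) {δ : ℝ}
    (g : (Fin n → V) → Bool)
    (hg : ∀ j w, |LP1 a (fun x => g (Function.update w j x)) -
      LP1 b fun x => g (Function.update w j x)| ≤ δ) :
    |LP a g - LP b g| ≤ n * δ := by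
  cases nonempty_fintype V
  induction n with
  | zero => simp [LP_eq_sum]
  | succ n ih =>
    obtain ⟨v₀⟩ := ha.nonempty
    have telescope : LP a g - LP b g = ∑ x, a x * (LP a (proj x g) - LP b (proj x g)) +
        ∑ w : Fin n → V, (∏ i, b (w i)) *
          (LP1 a (fun x => g (Fin.cons x w)) - LP1 b fun x => g (Fin.cons x w)) := by
      simp only [mul_sub, Finset.sum_sub_distrib, ← sum_mul_LP_proj, ← LP_eq_sum_mul_LP_proj]
      ring
    have later_coordinates : |∑ x, a x * (LP a (proj x g) - LP b (proj x g))| ≤ n * δ := by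
      refine ha.abs_sum_mul_le fun v => ih (proj v g) fun j w => ?_
      simpa only [proj, Fin.cons_update] using hg j.succ (Fin.cons v w)
    have first_coordinate : |∑ w : Fin n → V, (∏ i, b (w i)) *
        (LP1 a (fun x => g (Fin.cons x w)) - LP1 b fun x => g (Fin.cons x w))| ≤ δ := by
      refine hb.pi.abs_sum_mul_le fun w => ?_
      simpa only [Fin.update_cons_zero] using hg 0 (Fin.cons v₀ w)
    calc |LP a g - LP b g| ≤ n * δ + δ :=
          telescope ▸ (abs_add_le _ _).trans (add_le_add later_coordinates first_coordinate)
      _ = (n + 1 : ℕ) * δ := by push_cast; ring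

end Hybrid

section RandomSigns

open Real

variable {ι : Type*} [Fintype ι]

lemma sum_signs_exp_le [DecidableEq ι] (l : ℝ) (c : ι → ℝ) :
    ∑ s : ι → ℤˣ, exp (l * ∑ i, (s i : ℤ) * c i) ≤
      2 ^ Fintype.card ι * exp (l ^ 2 * (∑ i, c i ^ 2) / 2) := by
  calc ∑ s : ι → ℤˣ, exp (l * ∑ i, (s i : ℤ) * c i)
      = ∏ i, ∑ t : ℤˣ, exp (l * ((t : ℤ) * c i)) := by
        simp only [Finset.mul_sum, exp_sum, Fintype.prod_sum]
    _ = ∏ i, 2 * cosh (l * c i) := by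
        simp [UnitsInt.univ, cosh_eq, mul_div_cancel₀]
    _ ≤ ∏ i, 2 * exp ((l * c i) ^ 2 / 2) := by
        gcongr with i
        exact cosh_le_exp_half_sq _
    _ = 2 ^ Fintype.card ι * exp (l ^ 2 * (∑ i, c i ^ 2) / 2) := by
        simp only [Finset.prod_mul_distrib, Finset.prod_const, Finset.card_univ, ← exp_sum,
          mul_pow, Finset.mul_sum, Finset.sum_div]

lemma card_signs_lt_abs_sum_le [DecidableEq ι] {l : ℝ} (hl : 0 ≤ l) {c : ι → ℝ}
    (hc : ∀ i, |c i| ≤ 1) :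
    (Finset.card {s : ι → ℤˣ | l * Fintype.card ι < |∑ i, (s i : ℤ) * c i|} : ℝ) *
      exp (l ^ 2 * Fintype.card ι / 2) ≤ 2 * 2 ^ Fintype.card ι := by
  set n := Fintype.card ι
  set X : (ι → ℤˣ) → ℝ := fun s => ∑ i, (s i : ℤ) * c i
  set E := exp (l ^ 2 * n / 2)
  have sum_sq_le : ∑ i, c i ^ 2 ≤ n := by
    simpa [n] using Finset.sum_le_sum fun i (_ : i ∈ Finset.univ) =>
      (sq_le_one_iff_abs_le_one _).2 (hc i)
  have sum_exp_le (t : ℝ) (ht : t ^ 2 = l ^ 2) : ∑ s, exp (t * X s) ≤ 2 ^ n * E := by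
    refine (sum_signs_exp_le t c).trans ?_
    rw [ht]
    dsimp only [E]
    gcongr
  have chernoff : Finset.card {s | l * n < |X s|} * (E * E) ≤ 2 * 2 ^ n * E := by
    calc Finset.card {s | l * n < |X s|} * (E * E)
        = ∑ s with l * n < |X s|, exp (l * (l * n)) := by
          rw [Finset.sum_const, nsmul_eq_mul, ← exp_add]
          ring_nf
      _ ≤ ∑ s with l * n < |X s|, exp (l * |X s|) := by
          gcongr with s hs
          exact (Finset.mem_filter.1 hs).2.le
      _ ≤ ∑ s, exp (l * |X s|) :=
          Finset.sum_le_sum_of_subset_of_nonneg (Finset.filter_subset _ _) fun _ _ _ =>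
            (exp_pos _).le
      _ ≤ ∑ s, (exp (l * X s) + exp (-l * X s)) := by
          gcongr with s
          simpa only [abs_mul, abs_of_nonneg hl, neg_mul] using exp_abs_le (l * X s)
      _ ≤ 2 * 2 ^ n * E := by
          rw [Finset.sum_add_distrib]
          linarith [sum_exp_le l rfl, sum_exp_le (-l) (neg_sq l)]
  refine le_of_mul_le_mul_right ?_ (exp_pos (l ^ 2 * n / 2))
  rwa [mul_assoc]

lemma exists_signs_forall_abs_sum_le {l : ℝ} (hl : 0 ≤ l) (F : Finset (ι → ℝ))
    (hF : ∀ c ∈ F, ∀ i, |c i| ≤ 1)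
    (hcard : 2 * (F.card : ℝ) < exp (l ^ 2 * Fintype.card ι / 2)) :
    ∃ s : ι → ℤˣ, ∀ c ∈ F, |∑ i, (s i : ℤ) * c i| ≤ l * Fintype.card ι := by
  classical
  by_contra! hbad
  let bad (c : ι → ℝ) : Finset (ι → ℤˣ) := {s | l * Fintype.card ι < |∑ i, (s i : ℤ) * c i|}
  have univ_subset : Finset.univ ⊆ F.biUnion bad := fun s _ => by simpa [bad] using hbad s
  have two_pow_le : (2 : ℝ) ^ Fintype.card ι ≤ ∑ c ∈ F, ((bad c).card : ℝ) := by
    have := (Finset.card_le_card univ_subset).trans Finset.card_biUnion_le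
    simp only [Finset.card_univ, Fintype.card_fun, Fintype.card_units_int] at this
    exact_mod_cast this
  set E := exp (l ^ 2 * Fintype.card ι / 2)
  have union_bound : 2 ^ Fintype.card ι * E ≤ 2 ^ Fintype.card ι * (2 * F.card) := by
    calc 2 ^ Fintype.card ι * E ≤ (∑ c ∈ F, ((bad c).card : ℝ)) * E := by gcongr
      _ = ∑ c ∈ F, (bad c).card * E := Finset.sum_mul _ _ _
      _ ≤ ∑ _c ∈ F, 2 * 2 ^ Fintype.card ι :=
          Finset.sum_le_sum fun c hc => card_signs_lt_abs_sum_le hl (hF c hc)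
      _ = 2 ^ Fintype.card ι * (2 * F.card) := by
          rw [Finset.sum_const, nsmul_eq_mul]
          ring
  exact (le_of_mul_le_mul_left union_bound (by positivity)).not_gt hcard

end RandomSigns

section UniformOnGraph

variable {ι κ : Type*}

/-- The difference of the indicator of `d` across the `i`-th pair `{(i, 1), (i, -1)}`: the
coefficient of the `i`-th random sign when the two halves of a splitting are compared on `d`. -/
noncomputable def pairDiff (d : ι × ℤˣ → Bool) (i : ι) : ℝ :=
  (if d (i, 1) then 1 else 0) - if d (i, -1) then 1 else 0

lemma abs_pairDiff_le_one (d : ι × ℤˣ → Bool) (i : ι) : |pairDiff d i| ≤ 1 := by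
  unfold pairDiff
  split_ifs <;> simp

variable [Fintype ι] [DecidableEq κ]

/-- The uniform distribution on the graph `{(i, s i)}` of `s`. With `κ = ℤˣ`, the domain `ι × κ`
is a union of pairs indexed by `ι`, and `s`, `-s` select complementary halves of it. -/
noncomputable def uniformOnGraph (s : ι → κ) : ι × κ → ℝ :=
  fun x => if x.2 = s x.1 then (Fintype.card ι : ℝ)⁻¹ else 0

lemma disjoint_support_uniformOnGraph {s t : ι → κ} (hst : ∀ i, s i ≠ t i) :
    Disjoint (Function.support (uniformOnGraph s)) (Function.support (uniformOnGraph t)) := by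
  refine Set.disjoint_left.2 fun x hs ht => hst x.1 ?_
  have hxs : x.2 = s x.1 := (ite_ne_right_iff.1 hs).1
  have hxt : x.2 = t x.1 := (ite_ne_right_iff.1 ht).1
  exact hxs.symm.trans hxt

lemma isDist_uniformOnGraph [Nonempty ι] [Finite κ] (s : ι → κ) :
    IsDist (uniformOnGraph s) := by
  cases nonempty_fintype κ
  refine ⟨fun x => ?_, ?_⟩
  · unfold uniformOnGraph
    positivity
  · have sum_eq_one : ∑ x, uniformOnGraph s x = 1 := by
      simp [uniformOnGraph, Fintype.sum_prod_type]
    exact sum_eq_one ▸ hasSum_fintype _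

lemma LP1_uniformOnGraph [Finite κ] (s : ι → κ) (d : ι × κ → Bool) :
    LP1 (uniformOnGraph s) d = (Fintype.card ι : ℝ)⁻¹ * ∑ i, if d (i, s i) then 1 else 0 := by
  cases nonempty_fintype κ
  simp only [LP1_eq_sum, uniformOnGraph, Fintype.sum_prod_type, ite_mul, zero_mul,
    Finset.sum_ite_eq', Finset.mem_univ, if_true, Finset.mul_sum]

lemma LP1_uniformOnGraph_sub_neg (s : ι → ℤˣ) (d : ι × ℤˣ → Bool) :
    LP1 (uniformOnGraph s) d - LP1 (uniformOnGraph (-s)) d =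
      (Fintype.card ι : ℝ)⁻¹ * ∑ i, (s i : ℤ) * pairDiff d i := by
  rw [LP1_uniformOnGraph, LP1_uniformOnGraph, ← mul_sub, ← Finset.sum_sub_distrib]
  congr! 2 with i
  rcases Int.units_eq_one_or (s i) with hi | hi <;> simp [hi, pairDiff]

lemma exists_signs_forall_abs_LP1_sub_le [Nonempty ι] {l : ℝ} (hl : 0 ≤ l)
    (D : Set (ι × ℤˣ → Bool))
    (hD : 2 * (D.ncard : ℝ) < Real.exp (l ^ 2 * Fintype.card ι / 2)) :
    ∃ s : ι → ℤˣ, ∀ d ∈ D,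
      |LP1 (uniformOnGraph s) d - LP1 (uniformOnGraph (-s)) d| ≤ l := by
  classical
  have card_image_le : ((D.toFinset.image pairDiff).card : ℝ) ≤ D.ncard := by
    rw [Set.ncard_eq_toFinset_card']
    exact_mod_cast Finset.card_image_le
  obtain ⟨s, hs⟩ := exists_signs_forall_abs_sum_le hl (D.toFinset.image pairDiff)
    (Finset.forall_mem_image.2 fun d _ => abs_pairDiff_le_one d) (by linarith)
  refine ⟨s, fun d hd => ?_⟩
  rw [LP1_uniformOnGraph_sub_neg, abs_mul, abs_of_nonneg (by positivity),
    inv_mul_le_iff₀ (by positivity), mul_comm]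
  exact hs _ (Finset.mem_image_of_mem _ (Set.mem_toFinset.2 hd))

lemma exists_signs_forall_abs_LP_sub_le [Nonempty ι] {n d : ℕ} {l : ℝ} (hl : 0 ≤ l)
    {G : Set ((Fin n → ι × ℤˣ) → Bool)} (hG : ∀ j w, vcDim (fiberClass G j w) ≤ d)
    (hcard : 2 * (n * ((2 * Fintype.card ι) ^ n * ((d + 1) * (2 * Fintype.card ι) ^ d)) : ℝ) <
      Real.exp (l ^ 2 * Fintype.card ι / 2)) :
    ∃ s : ι → ℤˣ, ∀ g ∈ G,
      |LP (uniformOnGraph s) g - LP (uniformOnGraph (-s)) g| ≤ n * l := by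
  have ncard_le : ((⋃ j, ⋃ w, fiberClass G j w).ncard : ℝ) ≤
      n * ((2 * Fintype.card ι) ^ n * ((d + 1) * (2 * Fintype.card ι) ^ d)) := by
    have := ncard_iUnion_fiberClass_le hG
    rw [Fintype.card_prod, Fintype.card_units_int, mul_comm _ 2] at this
    exact_mod_cast this
  obtain ⟨s, hs⟩ := exists_signs_forall_abs_LP1_sub_le hl _
    (lt_of_le_of_lt (mul_le_mul_of_nonneg_left ncard_le two_pos.le) hcard)
  refine ⟨s, fun g hg => abs_LP_sub_LP_le (isDist_uniformOnGraph s) (isDist_uniformOnGraph _) g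
    fun j w => hs _ ?_⟩
  exact Set.mem_iUnion₂.2 ⟨j, w, g, hg, rfl⟩

end UniformOnGraph

section Extend

variable {V α : Type*} (e : α ↪ V)

lemma IsDist.extend {p : α → ℝ} (hp : IsDist p) : IsDist (Function.extend e p (0 : V → ℝ)) := by
  refine ⟨fun v => ?_, (hasSum_extend_zero e.injective).2 hp.2⟩
  by_cases hv : ∃ x, e x = v
  · obtain ⟨x, rfl⟩ := hv
    exact (e.injective.extend_apply p _ x).symm ▸ hp.1 x
  · exact (Function.extend_apply' p (0 : V → ℝ) v hv).ge

lemma LP_extend {n : ℕ} (p : α → ℝ) (g : (Fin n → V) → Bool) :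
    LP (Function.extend e p (0 : V → ℝ)) g = LP p fun w => g (e ∘ w) := by
  have support_subset : Function.support (fun w : Fin n → V =>
      (∏ i, Function.extend e p (0 : V → ℝ) (w i)) * (if g w then 1 else 0)) ⊆
      Set.range fun u : Fin n → α => e ∘ u := by
    intro w hw
    have mem_range (i : Fin n) : ∃ x, e x = w i := by
      by_contra hi
      exact Finset.prod_ne_zero_iff.1 (left_ne_zero_of_mul hw) i (Finset.mem_univ i)
        (Function.extend_apply' p _ _ hi)
    choose u hu using mem_range
    exact ⟨u, funext hu⟩
  rw [LP, ← e.injective.comp_left.tsum_eq support_subset]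
  simp only [LP, Function.comp_apply, e.injective.extend_apply]

end Extend

lemma IPM_le {V : Type*} {n : ℕ} {G : Set ((Fin n → V) → Bool)} {p₁ p₂ : V → ℝ} {δ : ℝ}
    (hδ : 0 ≤ δ) (hG : ∀ g ∈ G, |LP p₁ g - LP p₂ g| ≤ δ) : IPM G p₁ p₂ ≤ δ :=
  Real.iSup_le (fun g => Real.iSup_le (hG g) hδ) hδ

lemma exists_mul_pow_lt_exp (C : ℝ) (D : ℕ) {s : ℝ} (hs : 0 < s) :
    ∃ N : ℕ, 0 < N ∧ C * (N : ℝ) ^ D < Real.exp (s * N) := by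
  have isLittleO := ((isLittleO_pow_exp_pos_mul_atTop D hs).const_mul_left C).comp_tendsto
    tendsto_natCast_atTop_atTop
  obtain ⟨N, hN, hN_pos⟩ :=
    ((isLittleO.def one_half_pos).and (Filter.eventually_gt_atTop 0)).exists
  refine ⟨N, hN_pos, ?_⟩
  have exp_pos := Real.exp_pos (s * N)
  calc C * (N : ℝ) ^ D ≤ 1 / 2 * Real.exp (s * N) := by
        simpa only [Function.comp_apply, Real.norm_eq_abs, Real.abs_exp] using
          (le_abs_self _).trans hN
    _ < Real.exp (s * N) := by linarith

theorem stmt12_general {V : Type*} [Infinite V] {n : ℕ} {G : Set ((Fin n → V) → Bool)}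
    (hG : IsDistinguishingClass G) (hfin : gvcDim n G ≠ ⊤) {ε : ℝ} (hε : 0 < ε) :
    ∃ q₁ q₂ : V → ℝ, IsDist q₁ ∧ IsDist q₂ ∧
      (Function.support q₁).Finite ∧ (Function.support q₂).Finite ∧
      Disjoint (Function.support q₁) (Function.support q₂) ∧
      IPM G q₁ q₂ < ε := by
  obtain ⟨d, hd⟩ := ENat.ne_top_iff_exists.1 hfin
  obtain ⟨l, hl, hlε⟩ : ∃ l : ℝ, 0 < l ∧ n * l < ε :=
    exists_pos_mul_lt hε n
  obtain ⟨N, hN_pos, hN⟩ :=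
    exists_mul_pow_lt_exp (2 * (n * (2 ^ n * ((d + 1) * 2 ^ d)))) (n + d) (s := l ^ 2 / 2)
      (by positivity)
  have : Nonempty (Fin N) := ⟨⟨0, hN_pos⟩⟩
  let e : Fin N × ℤˣ ↪ V := (Fintype.equivFin _).toEmbedding.trans
    (Fin.valEmbedding.trans (Infinite.natEmbedding V))
  have vcDim_fiber_le (j w) : vcDim (fiberClass ((fun g u => g (e ∘ u)) '' G) j w) ≤ d := by
    rw [fiberClass_image_comp, hd]
    exact (vcDim_image_comp_le e _).trans (vcDim_fiberClass_le_gvcDim hG j (e ∘ w))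
  obtain ⟨s, hs⟩ := exists_signs_forall_abs_LP_sub_le hl.le vcDim_fiber_le (by
    rw [Fintype.card_fin, mul_div_right_comm]
    convert hN using 1
    ring)
  refine ⟨Function.extend e (uniformOnGraph s) 0, Function.extend e (uniformOnGraph (-s)) 0,
    (isDist_uniformOnGraph s).extend e, (isDist_uniformOnGraph (-s)).extend e, ?_, ?_, ?_,
    (IPM_le (by positivity) fun g hg => ?_).trans_lt hlε⟩
  · rw [Function.support_extend_zero e.injective]
    exact (Set.toFinite _).image e
  · rw [Function.support_extend_zero e.injective]
    exact (Set.toFinite _).image e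
  · rw [Function.support_extend_zero e.injective, Function.support_extend_zero e.injective]
    exact (Set.disjoint_image_iff e.injective).2
      (disjoint_support_uniformOnGraph fun i => units_ne_neg_self (s i))
  · rw [LP_extend, LP_extend]
    exact hs _ (Set.mem_image_of_mem _ hg)

/-- indistinguishable distributions with disjoint supports for
`(k−1)`-distinguishing classes (Claim `disjointk`). -/
theorem stmt12 (V : Type) [Countable V] [Infinite V] (k : ℕ) (hk : 2 ≤ k)
    (G : Set ((Fin (k - 1) → V) → Bool)) (hG : IsDistinguishingClass G)
    (hfin : gvcDim (k - 1) G ≠ ⊤) (ε : ℝ) (hε : 0 < ε) :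
    ∃ q₁ q₂ : V → ℝ, IsDist q₁ ∧ IsDist q₂ ∧
      (Function.support q₁).Finite ∧ (Function.support q₂).Finite ∧
      Disjoint (Function.support q₁) (Function.support q₂) ∧
      IPM G q₁ q₂ < ε := by
  obtain ⟨m, rfl⟩ := Nat.exists_eq_add_of_le hk
  exact stmt12_general hG hfin hε

end GraphDisc
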